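/- arXiv:1803.05743 — 2 statements merged into one kernel-verified Lean document; each statement's English description precedes it below -/
import Mathlib

section
/- Twisting local Galois Gauss sums by unramified characters (Proposition 3.4, abelian case): let ρ : Kˣ → ℂˣ be a group homomorphism that is unramified, i.e. ρ(u) = 1 for all u ∈ 𝓞ˣ. Then (a) m is also the minimal integer such that the product character χ·ρ is trivial on U^m, so χ and χ·ρ have the same conductor 𝔪^m; and (b) for every nonzero c ∈ 𝓞 with c𝓞 = 𝔪^m·𝔇 and every transversal S of U^m one has Σ_{u∈S} (χρ)(u c⁻¹)·ψ(u c⁻¹) = ρ(c)⁻¹ · Σ_{u∈S} χ(u c⁻¹)·ψ(u c⁻¹); that is, τ_K(χ ⊗ ρ) = ρ(c)⁻¹·τ_K(χ) for any generator c of 𝔣(χ)𝔇. -/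
/-!
The function `unitChar χ` on `K` is multiplicative in the argument and in `χ`, and compatible with
inverses. An unramified `ρ` is `1` on units, so `χ * ρ` and `χ` agree on units, which gives the
equality of conductors. On `u c⁻¹` the character `ρ` takes the constant value `ρ(c)⁻¹`, which
factors out of the Gauss sum term by term.
-/

open scoped BigOperators

set_option synthInstance.maxHeartbeats 1000000
set_option maxHeartbeats 2000000

/-- Extension of a character `χ : Kˣ → ℂˣ` to a function on `K` (zero at `0`). -/
noncomputable def unitChar {K : Type*} [Field K] (χ : Kˣ →* ℂˣ) (x : K) : ℂ :=
  letI := Classical.dec (x = 0)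
  if h : x = 0 then 0 else (χ (Units.mk0 x h) : ℂ)

/-- `S` is a set of coset representatives for the subgroup of units `u` with
`u - 1 ∈ J` inside the full unit group. -/
def IsTransversal {O : Type*} [CommRing O] (J : Ideal O) (S : Finset Oˣ) : Prop :=
  ∀ v : Oˣ, ∃! u : Oˣ, u ∈ S ∧ (((v * u⁻¹ : Oˣ) : O) - 1) ∈ J

theorem unitChar_charMul {K : Type*} [Field K] (χ ρ : Kˣ →* ℂˣ) (x : K) :
    unitChar (χ * ρ) x = unitChar χ x * unitChar ρ x := by
  unfold unitChar
  by_cases h : x = 0 <;> simp [h]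

theorem unitChar_mul {K : Type*} [Field K] (χ : Kˣ →* ℂˣ) (x y : K) :
    unitChar χ (x * y) = unitChar χ x * unitChar χ y := by
  unfold unitChar
  by_cases hx : x = 0
  · simp [hx]
  by_cases hy : y = 0
  · simp [hy]
  simp [hx, hy, Units.mk0_mul]

theorem unitChar_inv {K : Type*} [Field K] (χ : Kˣ →* ℂˣ) (x : K) :
    unitChar χ x⁻¹ = (unitChar χ x)⁻¹ := by
  unfold unitChar
  by_cases hx : x = 0
  · simp [hx]
  have h : Units.mk0 x⁻¹ (inv_ne_zero hx) = (Units.mk0 x hx)⁻¹ := by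
    ext; simp
  simp [hx, h]

/-- Twisting local Galois Gauss sums by unramified characters:
if `ρ` is unramified, then (a) `χ` and `χ ⊗ ρ` have the same conductor `𝔪^m`, and
(b) `τ_K(χ ⊗ ρ) = ρ(c)⁻¹ · τ_K(χ)` for any generator `c` of `𝔣(χ)𝔇`. -/
theorem gaussSum_unramified_twist
    (p : ℕ) [Fact p.Prime]
    (K : Type*) [Field K] [Algebra ℚ_[p] K] [FiniteDimensional ℚ_[p] K]
    [Algebra ℤ_[p] K] [IsScalarTower ℤ_[p] ℚ_[p] K]
    -- the maximal ideal of the ring of integers `𝓞 = integralClosure ℤ_[p] K`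
    (𝔪 : Ideal (integralClosure ℤ_[p] K)) (h𝔪 : 𝔪.IsMaximal)
    (h𝔪uniq : ∀ I : Ideal (integralClosure ℤ_[p] K), I.IsMaximal → I = 𝔪)
    -- the different ideal `𝔇`, characterized by the property that
    -- `x ∈ 𝔇⁻¹ ↔ Tr_{K/ℚ_p}(x 𝓞) ⊆ ℤ_p`
    (𝔇 : Ideal (integralClosure ℤ_[p] K)) (h𝔇ne : 𝔇 ≠ ⊥)
    (h𝔇 : ∀ x : K,
      (∀ a : integralClosure ℤ_[p] K, ∃ z : ℤ_[p],
          (z : ℚ_[p]) = Algebra.trace ℚ_[p] K (x * (a : K))) ↔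
        (∀ d ∈ 𝔇, ∃ y : integralClosure ℤ_[p] K, (y : K) = x * (d : K)))
    -- the standard additive character `ψ`, trivial on the inverse different
    (ψ : AddChar K ℂˣ)
    (hψ : ∀ x : K,
      (∀ a : integralClosure ℤ_[p] K, ∃ z : ℤ_[p],
          (z : ℚ_[p]) = Algebra.trace ℚ_[p] K (x * (a : K))) → ψ x = 1)
    -- the multiplicative character `χ`, with conductor exponent `m`
    (χ : Kˣ →* ℂˣ) (m : ℕ)
    (hχ : ∀ u : (integralClosure ℤ_[p] K)ˣ,
        ((u : integralClosure ℤ_[p] K) - 1) ∈ 𝔪 ^ m →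
        unitChar χ ((u : integralClosure ℤ_[p] K) : K) = 1)
    (hχmin : ∀ k : ℕ,
        (∀ u : (integralClosure ℤ_[p] K)ˣ,
          ((u : integralClosure ℤ_[p] K) - 1) ∈ 𝔪 ^ k →
          unitChar χ ((u : integralClosure ℤ_[p] K) : K) = 1) → m ≤ k)
    -- an unramified character `ρ`, i.e. trivial on all units of `𝓞`
    (ρ : Kˣ →* ℂˣ)
    (hρ : ∀ u : (integralClosure ℤ_[p] K)ˣ,
        unitChar ρ ((u : integralClosure ℤ_[p] K) : K) = 1) :
    -- (a) `m` is also the minimal integer such that `χ · ρ` is trivial on `U^m`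
    ((∀ u : (integralClosure ℤ_[p] K)ˣ,
        ((u : integralClosure ℤ_[p] K) - 1) ∈ 𝔪 ^ m →
        unitChar (χ * ρ) ((u : integralClosure ℤ_[p] K) : K) = 1) ∧
      (∀ k : ℕ,
        (∀ u : (integralClosure ℤ_[p] K)ˣ,
          ((u : integralClosure ℤ_[p] K) - 1) ∈ 𝔪 ^ k →
          unitChar (χ * ρ) ((u : integralClosure ℤ_[p] K) : K) = 1) → m ≤ k)) ∧
    -- (b) `τ_K(χ ⊗ ρ) = ρ(c)⁻¹ · τ_K(χ)`
    (∀ c : integralClosure ℤ_[p] K, c ≠ 0 → Ideal.span {c} = 𝔪 ^ m * 𝔇 →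
      ∀ S : Finset (integralClosure ℤ_[p] K)ˣ, IsTransversal (𝔪 ^ m) S →
        ∑ u ∈ S, unitChar (χ * ρ) (((u : integralClosure ℤ_[p] K) : K) * ((c : K))⁻¹) *
            ((ψ (((u : integralClosure ℤ_[p] K) : K) * ((c : K))⁻¹) : ℂˣ) : ℂ) =
          (unitChar ρ (c : K))⁻¹ *
            ∑ u ∈ S, unitChar χ (((u : integralClosure ℤ_[p] K) : K) * ((c : K))⁻¹) *
              ((ψ (((u : integralClosure ℤ_[p] K) : K) * ((c : K))⁻¹) : ℂˣ) : ℂ)) := by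
  have key : ∀ u : (integralClosure ℤ_[p] K)ˣ,
      unitChar (χ * ρ) ((u : integralClosure ℤ_[p] K) : K) =
        unitChar χ ((u : integralClosure ℤ_[p] K) : K) := fun u => by
    rw [unitChar_charMul, hρ u, mul_one]
  refine ⟨⟨fun u hu => (key u).trans (hχ u hu),
    fun k hk => hχmin k fun u hu => (key u).symm.trans (hk u hu)⟩, ?_⟩
  intro c _ _ S _
  rw [Finset.mul_sum]
  refine Finset.sum_congr rfl fun u _ => ?_
  rw [unitChar_charMul, unitChar_mul ρ, hρ u, unitChar_inv]
  ring
end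

section
/- Compatible normal integral basis generators along an unramified p-tower (Lemma 4.5, version over a fixed base field): there exists a sequence (b_n)_{n≥0} with b_n ∈ 𝓞_{F_n} such that Tr_{F_{n+1}/F_n}(b_{n+1}) = b_n for all n ≥ 0, and such that for every n ≥ 0 the set of Galois conjugates {σ(b_n) : σ ∈ Gal(F_n/F)} is an 𝓞_F-basis of 𝓞_{F_n}; equivalently, 𝓞_{F_n} is a free module of rank 1 over the group ring 𝓞_F[Gal(F_n/F)], generated by b_n, for every n. -/
/-!
Write `G = Gal(E n / F)`, a `p`-group, and let `k` be the residue field of `𝓞_F`, a finite field of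
characteristic `p`. The theorem rests on two facts.

*An integer of trace one generates.* Let `b ∈ 𝓞_{E n}` have trace `1` over `F`. The `a ∈ k[G]` with
`∑ a σ • σ b = 0` modulo the maximal ideal form a subgroup of `k[G]` stable under left translation.
A `p`-group acting on a nonzero finite `p`-group fixes a nonzero element, and the fixed elements of
`k[G]` are the constants `c`; a nonzero constant relation reads `c * Tr b = c = 0`, which is absurd.
So the conjugates of `b` are independent modulo the maximal ideal (`forall_mem_of_sum_mem`). As
`𝓞_F` is a valuation ring, dividing a family of coefficients in `F` by one of largest value turns
this into linear independence over `F`, and shows that integers of `E n` have integral coordinates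
in the resulting `F`-basis (`existsUnique_coords`).

*The trace `𝓞_{E (n+1)} → 𝓞_{E n}` is onto.* Since `E (n+1) / E n` is unramified, this trace reduces
to the trace of the residue field extension, which is onto because finite fields are perfect; hence
some trace is a unit (`exists_trace_eq`).

Starting from `b 0 = 1`, one lifts successively along the traces; by transitivity every `b n` has
trace `1` over `F`.
-/

open scoped BigOperators

set_option synthInstance.maxHeartbeats 1000000
set_option maxHeartbeats 2000000

/-! ### Surjectivity of the trace in unramified extensions -/

section
variable {R S : Type*} [CommRing R] [CommRing S] [Algebra R S]

/-- If the maximal ideal `P` of a local Dedekind domain `R` with finite residue field generates a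
maximal ideal of `S`, the trace `S → R` is onto: it reduces modulo `P` to the trace of a separable
extension of fields, so it takes a unit value. -/
theorem intTrace_surjective_of_isMaximal_map [IsDedekindDomain R] [IsDomain S]
    [Module.IsTorsionFree R S] [Module.Finite R S] [IsIntegrallyClosed S]
    (P : Ideal R) [P.IsMaximal] (huniq : ∀ I : Ideal R, I.IsMaximal → I = P)
    [Finite (R ⧸ P)] (hPS : (P.map (algebraMap R S)).IsMaximal) :
    Function.Surjective (Algebra.intTrace R S) := by
  let : Field (R ⧸ P) := Ideal.Quotient.field P
  let : Field (S ⧸ P.map (algebraMap R S)) := Ideal.Quotient.field _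
  have hloc : IsLocalRing R := IsLocalRing.of_unique_max_ideal ⟨P, ‹_›, huniq⟩
  have hP : IsLocalRing.maximalIdeal R = P := huniq _ inferInstance
  have : Module.Finite (R ⧸ P) (S ⧸ P.map (algebraMap R S)) :=
    Module.Finite.of_restrictScalars_finite R _ _
  obtain ⟨y, hy⟩ := Algebra.trace_surjective (R ⧸ P) (S ⧸ P.map (algebraMap R S)) 1
  obtain ⟨y, rfl⟩ := Ideal.Quotient.mk_surjective y
  rw [Algebra.trace_quotient_eq_of_isDedekindDomain] at hy
  have hu : IsUnit (Algebra.intTrace R S y) := by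
    by_contra h
    have h' : Algebra.intTrace R S y ∈ P := hP ▸ (IsLocalRing.mem_maximalIdeal _).2 h
    rw [Ideal.Quotient.eq_zero_iff_mem.2 h'] at hy
    exact zero_ne_one hy
  intro r
  obtain ⟨u, hu⟩ := hu
  refine ⟨(r * ↑u⁻¹) • y, ?_⟩
  rw [map_smul, ← hu, smul_eq_mul, mul_assoc, Units.inv_mul, mul_one]
end

section
variable (p : ℕ) [Fact p.Prime]

/-- Stated for an arbitrary homomorphism, so that it covers both inclusions of fields and Galois
automorphisms. -/
theorem isMaximal_comap_mapIntegralClosure {A K L : Type*} [CommRing A] [CommRing K] [CommRing L]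
    [Algebra A K] [Algebra A L] (f : K →ₐ[A] L) (Q : Ideal (integralClosure A L)) [Q.IsMaximal] :
    (Q.comap f.mapIntegralClosure).IsMaximal := by
  refine Ideal.isMaximal_comap_of_isIntegral_of_isMaximal' f.mapIntegralClosure.toRingHom ?_ Q
  refine RingHom.IsIntegral.tower_top (algebraMap A _) _ ?_
  rw [AlgHom.toRingHom_eq_coe, AlgHom.comp_algebraMap]
  exact algebraMap_isIntegral_iff.2 inferInstance

variable (K : Type*) [Field K] [Algebra ℤ_[p] K]

theorem natCast_mem_of_isMaximal (P : Ideal (integralClosure ℤ_[p] K)) [P.IsMaximal] :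
    (p : integralClosure ℤ_[p] K) ∈ P := by
  have h : P.comap (algebraMap ℤ_[p] _) = IsLocalRing.maximalIdeal ℤ_[p] :=
    IsLocalRing.eq_maximalIdeal (Ideal.isMaximal_comap_of_isIntegral_of_isMaximal P)
  have : (p : ℤ_[p]) ∈ P.comap (algebraMap ℤ_[p] (integralClosure ℤ_[p] K)) := by
    rw [h, PadicInt.maximalIdeal_eq_span_p]
    exact Ideal.mem_span_singleton_self _
  simpa using this

variable [Algebra ℚ_[p] K] [IsScalarTower ℤ_[p] ℚ_[p] K] [FiniteDimensional ℚ_[p] K]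

theorem finite_residue (P : Ideal (integralClosure ℤ_[p] K)) [P.IsMaximal] :
    Finite (integralClosure ℤ_[p] K ⧸ P) := by
  have : CharZero K := charZero_of_injective_algebraMap (algebraMap ℚ_[p] K).injective
  have := IsIntegralClosure.finite ℤ_[p] ℚ_[p] K (integralClosure ℤ_[p] K)
  have h : P.comap (algebraMap ℤ_[p] _) = IsLocalRing.maximalIdeal ℤ_[p] :=
    IsLocalRing.eq_maximalIdeal (Ideal.isMaximal_comap_of_isIntegral_of_isMaximal P)
  have : P.LiesOver (IsLocalRing.maximalIdeal ℤ_[p]) := ⟨h.symm⟩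
  have : Finite (ℤ_[p] ⧸ IsLocalRing.maximalIdeal ℤ_[p]) :=
    Finite.of_equiv _ (PadicInt.residueField (p := p)).symm.toEquiv
  have : Module.Finite (ℤ_[p] ⧸ IsLocalRing.maximalIdeal ℤ_[p]) (integralClosure ℤ_[p] K ⧸ P) :=
    Module.Finite.of_restrictScalars_finite ℤ_[p] _ _
  exact Module.finite_of_finite (ℤ_[p] ⧸ IsLocalRing.maximalIdeal ℤ_[p])

variable {K} {L : Type*} [Field L] [Algebra ℚ_[p] L] [FiniteDimensional ℚ_[p] L]
    [Algebra ℤ_[p] L] [IsScalarTower ℤ_[p] ℚ_[p] L] [Algebra K L] [IsScalarTower ℚ_[p] K L]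

/-- The trace of an unramified extension of `p`-adic fields is onto on integers. -/
theorem exists_trace_eq (P : Ideal (integralClosure ℤ_[p] K)) [P.IsMaximal]
    (huniq : ∀ I : Ideal (integralClosure ℤ_[p] K), I.IsMaximal → I = P)
    (Q : Ideal (integralClosure ℤ_[p] L)) [Q.IsMaximal]
    (hQ : Q ≤ Ideal.span {x : integralClosure ℤ_[p] L | ∃ y ∈ P, (x : L) = algebraMap K L (y : K)})
    (b : integralClosure ℤ_[p] K) :
    ∃ c : integralClosure ℤ_[p] L, Algebra.trace K L (c : L) = (b : K) := by
  have : CharZero K := charZero_of_injective_algebraMap (algebraMap ℚ_[p] K).injective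
  have : CharZero L := charZero_of_injective_algebraMap (algebraMap ℚ_[p] L).injective
  have : FiniteDimensional K L := Module.Finite.of_restrictScalars_finite ℚ_[p] K L
  have hT : IsScalarTower ℤ_[p] K L := IsScalarTower.of_algebraMap_eq fun x => by
    rw [IsScalarTower.algebraMap_apply ℤ_[p] ℚ_[p] L, IsScalarTower.algebraMap_apply ℚ_[p] K L,
      ← IsScalarTower.algebraMap_apply ℤ_[p] ℚ_[p] K]
  let R := integralClosure ℤ_[p] K
  let S := integralClosure ℤ_[p] L
  let : Algebra R S := (IsScalarTower.toAlgHom ℤ_[p] K L).mapIntegralClosure.toRingHom.toAlgebra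
  have : IsScalarTower R S L := IsScalarTower.of_algebraMap_eq fun x => rfl
  have : IsScalarTower ℤ_[p] R S := IsScalarTower.of_algebraMap_eq fun x =>
    ((IsScalarTower.toAlgHom ℤ_[p] K L).mapIntegralClosure.commutes x).symm
  have : IsDedekindDomain R := integralClosure.isDedekindDomain ℤ_[p] ℚ_[p] K
  have : IsDedekindDomain S := integralClosure.isDedekindDomain ℤ_[p] ℚ_[p] L
  have : IsFractionRing R K := integralClosure.isFractionRing_of_finite_extension ℚ_[p] K
  have : Module.Finite ℤ_[p] S := IsIntegralClosure.finite ℤ_[p] ℚ_[p] L S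
  have : Module.Finite R S := Module.Finite.of_restrictScalars_finite ℤ_[p] R S
  have : IsIntegralClosure S R L := IsIntegralClosure.tower_top (R := ℤ_[p])
  have : Module.IsTorsionFree R S := by
    rw [Module.isTorsionFree_iff_algebraMap_injective]
    intro x y h
    exact Subtype.ext ((algebraMap K L).injective (congrArg Subtype.val h))
  have := finite_residue p K P
  have hmap : P.map (algebraMap R S) = Q := by
    refine le_antisymm ?_ (hQ.trans (Ideal.span_mono ?_))
    · rw [Ideal.map_le_iff_le_comap]
      exact (huniq _ (isMaximal_comap_mapIntegralClosure
        (IsScalarTower.toAlgHom ℤ_[p] K L) Q)).ge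
    · rintro x ⟨y, hy, h⟩
      exact ⟨y, hy, Subtype.ext h.symm⟩
  obtain ⟨c, hc⟩ := intTrace_surjective_of_isMaximal_map (S := S) P huniq (hmap ▸ ‹_›) b
  refine ⟨c, ?_⟩
  rw [← hc]
  exact (Algebra.algebraMap_intTrace (A := R) (B := S) (K := K) (L := L) c).symm
end

/-! ### Integers of trace one generate normal integral bases -/

section
variable {p : ℕ} [Fact p.Prime] {G k : Type*} [Group G]

/-- A nonzero translation-stable subgroup of the functions from a finite `p`-group `G` to a finite
group `k` of exponent `p` contains a nonzero constant, by counting fixed points modulo `p`. -/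
theorem exists_const_mem_of_isPGroup [Finite G] (hG : IsPGroup p G) [AddCommGroup k] [Finite k]
    (hp : ∀ x : k, p • x = 0) (A : AddSubgroup (G → k))
    (hA : ∀ g : G, ∀ a ∈ A, (fun h => a (g⁻¹ * h)) ∈ A) {a : G → k} (ha : a ∈ A) (ha0 : a ≠ 0) :
    ∃ c : k, c ≠ 0 ∧ (fun _ => c) ∈ A := by
  let : MulAction G A :=
    { smul := fun g a => ⟨fun h => a.1 (g⁻¹ * h), hA g a.1 a.2⟩
      one_smul := fun a => Subtype.ext <| funext fun h => by
        change a.1 (1⁻¹ * h) = a.1 h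
        simp
      mul_smul := fun x y a => Subtype.ext <| funext fun h => by
        change a.1 ((x * y)⁻¹ * h) = a.1 (y⁻¹ * (x⁻¹ * h))
        simp [mul_assoc] }
  have hord : addOrderOf (⟨a, ha⟩ : A) = p :=
    addOrderOf_eq_prime (Subtype.ext <| funext fun h => hp (a h))
      fun h => ha0 (congrArg Subtype.val h)
  have hdvd : p ∣ Nat.card A := hord ▸ addOrderOf_dvd_natCard _
  obtain ⟨b, hb, hb0⟩ := hG.exists_fixed_point_of_prime_dvd_card_of_fixed_point A hdvd
    (a := 0) (fun g => rfl)
  have hconst : b.1 = fun _ => b.1 1 := funext fun h => by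
    have : b.1 (h⁻¹ * h) = b.1 h := congrFun (congrArg Subtype.val (hb h)) h
    rw [← this, inv_mul_cancel]
  refine ⟨b.1 1, fun h => hb0 ?_, hconst ▸ b.2⟩
  exact Subtype.ext (by rw [hconst, h]; rfl)
end

section
variable {p : ℕ} [Fact p.Prime] {F L : Type*} [Field F] [Algebra ℚ_[p] F]
    [Algebra ℤ_[p] F] [IsScalarTower ℤ_[p] ℚ_[p] F] [FiniteDimensional ℚ_[p] F]
    [Field L] [Algebra ℤ_[p] L] [Algebra F L] [IsScalarTower ℤ_[p] F L]
    [FiniteDimensional F L] [IsGalois F L]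

/-- The conjugates of an integer of trace `1` are linearly independent modulo the maximal ideal,
expressed by coefficients in `𝓞_F` so that no quotient of `𝓞_L` is needed. -/
theorem forall_mem_of_sum_mem (hG : IsPGroup p (L ≃ₐ[F] L))
    (P : Ideal (integralClosure ℤ_[p] F)) [P.IsMaximal]
    (hPuniq : ∀ I : Ideal (integralClosure ℤ_[p] F), I.IsMaximal → I = P)
    (Q : Ideal (integralClosure ℤ_[p] L)) [Q.IsMaximal]
    (hQuniq : ∀ I : Ideal (integralClosure ℤ_[p] L), I.IsMaximal → I = Q)
    (b : integralClosure ℤ_[p] L) (hb : Algebra.trace F L (b : L) = 1)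
    (a : (L ≃ₐ[F] L) → integralClosure ℤ_[p] F) (z : integralClosure ℤ_[p] L) (hz : z ∈ Q)
    (haz : (z : L) = ∑ σ : L ≃ₐ[F] L, algebraMap F L (a σ : F) * σ (b : L))
    (σ : L ≃ₐ[F] L) : a σ ∈ P := by
  let φ := (IsScalarTower.toAlgHom ℤ_[p] F L).mapIntegralClosure
  have hφ : ∀ x, (φ x : L) = algebraMap F L (x : F) := fun x => rfl
  let s (g : L ≃ₐ[F] L) := (g.toAlgHom.restrictScalars ℤ_[p]).mapIntegralClosure
  have hs : ∀ g x, (s g x : L) = g (x : L) := fun g x => rfl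
  have hPQ : Q.comap φ = P := hPuniq _ (isMaximal_comap_mapIntegralClosure _ Q)
  have hsQ : ∀ g, ∀ x ∈ Q, s g x ∈ Q := fun g x hx => by
    have : Q.comap (s g) = Q := hQuniq _ (isMaximal_comap_mapIntegralClosure _ Q)
    rw [← this] at hx
    exact hx
  have := finite_residue p F P
  let T : ((L ≃ₐ[F] L) → integralClosure ℤ_[p] F) →+ integralClosure ℤ_[p] L :=
    { toFun := fun a => ∑ σ, φ (a σ) * s σ b
      map_zero' := by simp
      map_add' := by simp [add_mul, Finset.sum_add_distrib] }
  have hT : ∀ a, T a = ∑ σ, φ (a σ) * s σ b := fun a => rfl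
  -- `B` consists of the relations modulo `Q`, and `B.map π` of their reductions modulo `P`.
  let B : AddSubgroup ((L ≃ₐ[F] L) → integralClosure ℤ_[p] F) := Q.toAddSubgroup.comap T
  let π : ((L ≃ₐ[F] L) → integralClosure ℤ_[p] F) →+ ((L ≃ₐ[F] L) → integralClosure ℤ_[p] F ⧸ P) :=
    (Ideal.Quotient.mk P).toAddMonoidHom.compLeft _
  have haB : a ∈ B := by
    have : T a = z := Subtype.ext <| by rw [haz, hT]; simp [hφ, hs]
    exact (this ▸ hz : T a ∈ Q)
  by_contra hσ
  have hp : ∀ x : integralClosure ℤ_[p] F ⧸ P, p • x = 0 := by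
    intro x
    obtain ⟨x, rfl⟩ := Ideal.Quotient.mk_surjective x
    rw [nsmul_eq_mul, ← map_natCast (Ideal.Quotient.mk P), ← map_mul]
    exact Ideal.Quotient.eq_zero_iff_mem.2 (Ideal.mul_mem_right _ _ (natCast_mem_of_isMaximal p F P))
  have hB : ∀ g : L ≃ₐ[F] L, ∀ a ∈ B.map π, (fun h => a (g⁻¹ * h)) ∈ B.map π := by
    rintro g _ ⟨a, ha, rfl⟩
    refine ⟨fun h => a (g⁻¹ * h), ?_, rfl⟩
    have : T (fun h => a (g⁻¹ * h)) = s g (T a) := Subtype.ext <| by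
      rw [hs, hT, hT, ← Equiv.sum_comp (Equiv.mulLeft g)]
      simp [hφ, hs]
    change T (fun h => a (g⁻¹ * h)) ∈ Q
    rw [this]
    exact hsQ g _ ha
  have ha0 : π a ≠ 0 := by
    intro h
    exact hσ (Ideal.Quotient.eq_zero_iff_mem.1 (congrFun h σ))
  obtain ⟨c, hc0, a', ha'B, ha'⟩ :=
    exists_const_mem_of_isPGroup hG hp (B.map π) hB (AddSubgroup.mem_map_of_mem π haB) ha0
  obtain ⟨c, rfl⟩ := Ideal.Quotient.mk_surjective c
  refine hc0 (Ideal.Quotient.eq_zero_iff_mem.2 ?_)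
  rw [← hPQ, Ideal.mem_comap]
  -- The constant relation `c` evaluates to `c * Tr b = c`.
  have h1 : T (fun _ => c) = φ c := Subtype.ext <| by
    have := trace_eq_sum_automorphisms (K := F) (L := L) (b : L)
    rw [hb, map_one] at this
    rw [hT, ← Finset.mul_sum]
    simp [hs, ← this]
  have h2 : T (a' - fun _ => c) ∈ Q := by
    rw [hT]
    refine Ideal.sum_mem _ fun σ _ => Ideal.mul_mem_right _ _ ?_
    rw [← Ideal.mem_comap, hPQ]
    exact Ideal.Quotient.eq.1 (congrFun ha' σ)
  have h3 : T a' ∈ Q := ha'B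
  rw [map_sub] at h2
  rw [← h1]
  exact (Submodule.sub_mem_iff_right Q h3).1 h2

/-- The two consequences of `𝓞_F` being a valuation ring used below: inverses of non-integral
elements lie in `P`, and a nonzero finite family has a member dividing all the others. -/
theorem inv_mem_and_exists_forall_div (P : Ideal (integralClosure ℤ_[p] F)) [P.IsMaximal]
    (hPuniq : ∀ I : Ideal (integralClosure ℤ_[p] F), I.IsMaximal → I = P) :
    (∀ x : F, x ∉ integralClosure ℤ_[p] F → ∃ y ∈ P, (y : F) = x⁻¹) ∧
    ∀ {ι : Type _} [Finite ι] (c : ι → F), c ≠ 0 →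
      ∃ τ, c τ ≠ 0 ∧ ∀ σ, c σ / c τ ∈ integralClosure ℤ_[p] F := by
  have : CharZero F := charZero_of_injective_algebraMap (algebraMap ℚ_[p] F).injective
  have hloc : IsLocalRing (integralClosure ℤ_[p] F) :=
    IsLocalRing.of_unique_max_ideal ⟨P, ‹_›, hPuniq⟩
  have : IsDedekindDomain (integralClosure ℤ_[p] F) :=
    integralClosure.isDedekindDomain ℤ_[p] ℚ_[p] F
  have : IsFractionRing (integralClosure ℤ_[p] F) F :=
    integralClosure.isFractionRing_of_finite_extension ℚ_[p] F
  constructor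
  · intro x hx
    obtain ⟨y, hy⟩ | ⟨y, hy⟩ :=
      ValuationRing.isInteger_or_isInteger (integralClosure ℤ_[p] F) x
    · exact (hx (hy ▸ y.2)).elim
    · refine ⟨y, ?_, hy⟩
      by_contra hyP
      have hP : IsLocalRing.maximalIdeal (integralClosure ℤ_[p] F) = P := hPuniq _ inferInstance
      rw [← hP, IsLocalRing.mem_maximalIdeal, mem_nonunits_iff, not_not] at hyP
      obtain ⟨w, hw⟩ := hyP.exists_right_inv
      have hw' : (y : F) * w = 1 := congrArg Subtype.val hw
      have hy' : (y : F) = x⁻¹ := hy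
      apply hx
      rw [← inv_inv x, ← hy', inv_eq_of_mul_eq_one_right hw']
      exact w.2
  · intro ι _ c hc
    obtain ⟨i, hi⟩ := Function.ne_iff.1 hc
    have : Nonempty ι := ⟨i⟩
    let v := ValuationRing.valuation (integralClosure ℤ_[p] F) F
    obtain ⟨τ, hτ⟩ := Finite.exists_max fun i => v (c i)
    have hτ0 : c τ ≠ 0 := by
      intro h
      have := hτ i
      simp only [h, map_zero] at this
      exact hi (v.zero_iff.1 (le_zero_iff.1 this))
    refine ⟨τ, hτ0, fun σ => ?_⟩
    have h : v (c σ / c τ) ≤ 1 := by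
      rw [map_div₀]
      exact div_le_one_of_le₀ (hτ σ) zero_le
    obtain ⟨y, hy⟩ := (ValuationRing.mem_integer_iff (integralClosure ℤ_[p] F) F _).1 h
    exact hy ▸ y.2

/-- The conjugates of an integer of trace `1` form an `𝓞_F`-basis of `𝓞_L`. -/
theorem existsUnique_coords (hG : IsPGroup p (L ≃ₐ[F] L))
    (P : Ideal (integralClosure ℤ_[p] F)) [P.IsMaximal]
    (hPuniq : ∀ I : Ideal (integralClosure ℤ_[p] F), I.IsMaximal → I = P)
    (Q : Ideal (integralClosure ℤ_[p] L)) [Q.IsMaximal]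
    (hQuniq : ∀ I : Ideal (integralClosure ℤ_[p] L), I.IsMaximal → I = Q)
    (b : integralClosure ℤ_[p] L) (hb : Algebra.trace F L (b : L) = 1)
    (x : integralClosure ℤ_[p] L) :
    ∃! a : (L ≃ₐ[F] L) → integralClosure ℤ_[p] F,
      (x : L) = ∑ σ : L ≃ₐ[F] L, algebraMap F L (a σ : F) * σ (b : L) := by
  obtain ⟨hinv, hdiv⟩ := inv_mem_and_exists_forall_div P hPuniq
  have key := forall_mem_of_sum_mem hG P hPuniq Q hQuniq b hb
  have hli : LinearIndependent F fun σ : L ≃ₐ[F] L => σ (b : L) := by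
    rw [Fintype.linearIndependent_iff]
    intro c hc
    by_contra! h
    obtain ⟨τ, hτ0, hτ⟩ := hdiv c (Function.ne_iff.2 h)
    have h1 := key (fun σ => ⟨_, hτ σ⟩) 0 Q.zero_mem ?_ τ
    · refine (Ideal.ne_top_iff_one P).1 (Ideal.IsMaximal.ne_top ‹_›) ?_
      convert h1
      exact (div_self hτ0).symm
    · have := congrArg ((c τ)⁻¹ • ·) hc
      simp only [Finset.smul_sum, smul_zero, smul_smul] at this
      rw [ZeroMemClass.coe_zero, ← this]
      refine Finset.sum_congr rfl fun σ _ => ?_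
      simp only [Algebra.smul_def, div_eq_inv_mul]
  let B := basisOfLinearIndependentOfCardEqFinrank hli
    (by rw [← Nat.card_eq_fintype_card]; exact IsGalois.card_aut_eq_finrank F L)
  have hsum : (x : L) = ∑ σ : L ≃ₐ[F] L, B.repr x σ • σ (b : L) := by
    conv_lhs => rw [← B.sum_repr (x : L)]
    simp [B]
  have hmem : ∀ σ, B.repr x σ ∈ integralClosure ℤ_[p] F := by
    by_contra! ⟨ρ, hρ⟩
    have h0 : (fun σ => B.repr x σ) ≠ 0 := fun h => hρ <| by
      rw [congrFun h ρ]; exact zero_mem _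
    obtain ⟨τ, hτ0, hτ⟩ := hdiv _ h0
    obtain ⟨y, hyP, hy⟩ := hinv (B.repr x τ) fun h => hρ <| by
      rw [← div_mul_cancel₀ (B.repr x ρ) hτ0]
      exact mul_mem (hτ ρ) h
    -- Dividing by the coordinate at `τ` moves `x` into `Q`, while that coordinate becomes `1`.
    let φ := (IsScalarTower.toAlgHom ℤ_[p] F L).mapIntegralClosure
    have hPQ : Q.comap φ = P := hPuniq _ (isMaximal_comap_mapIntegralClosure _ Q)
    have hyQ : φ y ∈ Q := by rwa [← Ideal.mem_comap, hPQ]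
    have h1 := key (fun σ => ⟨_, hτ σ⟩) (φ y * x) (Ideal.mul_mem_right _ _ hyQ) ?_ τ
    · refine (Ideal.ne_top_iff_one P).1 (Ideal.IsMaximal.ne_top ‹_›) ?_
      convert h1
      exact (div_self hτ0).symm
    · change algebraMap F L (y : F) * (x : L) = _
      have := congrArg ((B.repr x τ)⁻¹ • ·) hsum
      simp only [Finset.smul_sum, smul_smul] at this
      rw [hy, ← Algebra.smul_def, this]
      refine Finset.sum_congr rfl fun σ _ => ?_
      simp only [Algebra.smul_def, div_eq_inv_mul]
  refine ⟨fun σ => ⟨_, hmem σ⟩, ?_, fun a ha => funext fun σ => Subtype.ext ?_⟩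
  · simpa only [Algebra.smul_def] using hsum
  · have h2 : ∑ σ : L ≃ₐ[F] L, ((a σ : F) - B.repr x σ) • σ (b : L) = 0 := by
      simp only [sub_smul, Finset.sum_sub_distrib]
      rw [← hsum, ha]
      simp [Algebra.smul_def]
    exact sub_eq_zero.1 (Fintype.linearIndependent_iff.1 hli _ h2 σ)
end

/-! ### The tower -/

/-- Compatible normal integral basis generators along an unramified `p`-tower:
given a tower `F = E 0 ⊆ E 1 ⊆ ⋯` of finite extensions of `ℚ_p` such that each
`E n / F` is Galois of degree `p^n` and unramified (the maximal ideal of `𝓞_F`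
generates the maximal ideal of `𝓞_{E n}`), there is a trace-compatible sequence
`b n ∈ 𝓞_{E n}` such that the Galois conjugates `{σ (b n) : σ ∈ Gal(E n / F)}`
form an `𝓞_F`-basis of `𝓞_{E n}` for every `n` (equivalently, `𝓞_{E n}` is free
of rank one over the group ring `𝓞_F[Gal(E n / F)]`, generated by `b n`). -/
theorem exists_compatible_normal_integral_basis
    (p : ℕ) [Fact p.Prime]
    (F : Type*) [Field F] [Algebra ℚ_[p] F] [FiniteDimensional ℚ_[p] F]
    [Algebra ℤ_[p] F] [IsScalarTower ℤ_[p] ℚ_[p] F]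
    (E : ℕ → Type*) [∀ n, Field (E n)]
    [∀ n, Algebra ℚ_[p] (E n)] [∀ n, FiniteDimensional ℚ_[p] (E n)]
    [∀ n, Algebra ℤ_[p] (E n)] [∀ n, IsScalarTower ℤ_[p] ℚ_[p] (E n)]
    -- the tower structure: `F ⊆ E n ⊆ E (n+1)`, compatibly
    [∀ n, Algebra F (E n)] [∀ n, IsScalarTower ℚ_[p] F (E n)]
    [∀ n, FiniteDimensional F (E n)]
    [∀ n, Algebra (E n) (E (n + 1))] [∀ n, IsScalarTower F (E n) (E (n + 1))]
    -- `E 0 = F` and each `E n / F` is Galois of degree `p^n`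
    (hdeg0 : Module.finrank F (E 0) = 1)
    [∀ n, IsGalois F (E n)]
    (hdeg : ∀ n, Module.finrank F (E n) = p ^ n)
    -- the maximal ideals of the rings of integers
    (𝔪F : Ideal (integralClosure ℤ_[p] F)) (h𝔪F : 𝔪F.IsMaximal)
    (h𝔪Funiq : ∀ I : Ideal (integralClosure ℤ_[p] F), I.IsMaximal → I = 𝔪F)
    (𝔪 : ∀ n, Ideal (integralClosure ℤ_[p] (E n))) (h𝔪 : ∀ n, (𝔪 n).IsMaximal)
    (h𝔪uniq : ∀ n, ∀ I : Ideal (integralClosure ℤ_[p] (E n)), I.IsMaximal → I = 𝔪 n)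
    -- each `E n / F` is unramified: the maximal ideal of `𝓞_F` generates the
    -- maximal ideal of `𝓞_{E n}`
    (hunram : ∀ n, 𝔪 n = Ideal.span
      {x : integralClosure ℤ_[p] (E n) |
        ∃ y ∈ 𝔪F, (x : E n) = algebraMap F (E n) (y : F)}) :
    ∃ b : ∀ n, integralClosure ℤ_[p] (E n),
      -- trace compatibility: `Tr_{E (n+1) / E n} (b (n+1)) = b n`
      (∀ n, Algebra.trace (E n) (E (n + 1)) ((b (n + 1) : E (n + 1))) = (b n : E n)) ∧
      -- normal integral basis: every element of `𝓞_{E n}` is, in a unique way, an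
      -- `𝓞_F`-linear combination of the Galois conjugates of `b n`
      (∀ n, ∀ x : integralClosure ℤ_[p] (E n),
        ∃! a : (E n ≃ₐ[F] E n) → integralClosure ℤ_[p] F,
          (x : E n) = ∑ σ : E n ≃ₐ[F] E n,
            algebraMap F (E n) ((a σ : F)) * σ ((b n : E n))) := by
  have hQF : ∀ n, IsScalarTower ℤ_[p] F (E n) := fun n => IsScalarTower.of_algebraMap_eq fun x => by
    rw [IsScalarTower.algebraMap_apply ℤ_[p] ℚ_[p] (E n),
      IsScalarTower.algebraMap_apply ℚ_[p] F (E n), ← IsScalarTower.algebraMap_apply ℤ_[p] ℚ_[p] F]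
  have hQE : ∀ n, IsScalarTower ℚ_[p] (E n) (E (n + 1)) := fun n =>
    IsScalarTower.of_algebraMap_eq fun x => by
      rw [IsScalarTower.algebraMap_apply ℚ_[p] F (E (n + 1)),
        IsScalarTower.algebraMap_apply F (E n) (E (n + 1)),
        ← IsScalarTower.algebraMap_apply ℚ_[p] F (E n)]
  have hle : ∀ n, 𝔪 (n + 1) ≤ Ideal.span {x : integralClosure ℤ_[p] (E (n + 1)) |
      ∃ y ∈ 𝔪 n, (x : E (n + 1)) = algebraMap (E n) (E (n + 1)) (y : E n)} := fun n => by
    conv_lhs => rw [hunram (n + 1)]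
    refine Ideal.span_mono ?_
    rintro x ⟨y, hy, hxy⟩
    refine ⟨(IsScalarTower.toAlgHom ℤ_[p] F (E n)).mapIntegralClosure y, ?_, ?_⟩
    · rw [hunram n]
      exact Ideal.subset_span ⟨y, hy, rfl⟩
    · rw [hxy, IsScalarTower.algebraMap_apply F (E n) (E (n + 1))]
      rfl
  choose next hnext using fun n => exists_trace_eq p (𝔪 n) (h𝔪uniq n) (𝔪 (n + 1)) (hle n)
  let b : ∀ n, integralClosure ℤ_[p] (E n) := fun n => Nat.rec (motive := fun n => integralClosure ℤ_[p] (E n)) 1 next n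
  have hb : ∀ n, Algebra.trace (E n) (E (n + 1)) (b (n + 1) : E (n + 1)) = (b n : E n) :=
    fun n => hnext n (b n)
  have htr : ∀ n, Algebra.trace F (E n) (b n : E n) = 1 := by
    intro n
    induction n with
    | zero =>
      have := Algebra.trace_algebraMap (R := F) (S := E 0) 1
      rw [hdeg0, one_smul, map_one] at this
      exact this
    | succ n ih =>
      have : FiniteDimensional (E n) (E (n + 1)) :=
        Module.Finite.of_restrictScalars_finite ℚ_[p] _ _
      rw [← Algebra.trace_trace (S := E n), hb, ih]
  refine ⟨b, hb, fun n x => existsUnique_coords (IsPGroup.of_card (n := n) ?_) 𝔪F h𝔪Funiq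
    (𝔪 n) (h𝔪uniq n) (b n) (htr n) x⟩
  rw [IsGalois.card_aut_eq_finrank, hdeg]
end
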